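/- arXiv:2209.08870 — 3 statements merged into one kernel-verified Lean document; each statement's English description precedes it below -/
import Mathlib

section
/- Let A be a unital C*-algebra, q ∈ (0,1), and a ∈ A with a*a = q²·a a* + (1−q²)·1. Then the spectrum of a*a is contained in {1−q^{2n} : n ∈ ℕ, n ≥ 1} ∪ {1}, and the spectrum of a a* is contained in {1−q^{2n} : n ∈ ℕ} ∪ {1}. -/
/-!
In terms of `u = 1 - a * b` and `v = 1 - b * a`, the relation `b * a = r • (a * b) + (1 - r) • 1`
becomes `v = r • u`. Since `a * b` and `b * a` have the same nonzero spectrum, `u` and `v` have the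
same spectrum away from `1`. Hence a nonzero `t ≠ 1` in the spectrum of `u` is `r * s` for some `s`
in the spectrum of `u`. Repeating this either reaches `s = 1` after `n` steps, so that `t = r ^ n`,
or writes `t` as `r ^ n * s` for every `n` with `s` in a bounded set, which is impossible when
`‖r‖ < 1`.
-/

open Filter
open scoped Pointwise Topology

section Ladder

theorem exists_mem_eq_pow_mul {M : Type*} [MonoidWithZero M] {S : Set M} {r t : M}
    (hS : ∀ s ∈ S, s ≠ 1 → s ≠ 0 → ∃ s' ∈ S, s = r * s')
    (ht : t ∈ S) (ht0 : t ≠ 0) (htr : ∀ n : ℕ, t ≠ r ^ n) (n : ℕ) :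
    ∃ s ∈ S, t = r ^ n * s := by
  induction n with
  | zero => exact ⟨t, ht, by rw [pow_zero, one_mul]⟩
  | succ n ih =>
    obtain ⟨s, hs, hts⟩ := ih
    have hs1 : s ≠ 1 := fun hs1 ↦ htr n (by rw [hts, hs1, mul_one])
    have hs0 : s ≠ 0 := fun hs0 ↦ ht0 (by rw [hts, hs0, mul_zero])
    obtain ⟨s', hs', hss'⟩ := hS s hs hs1 hs0
    exact ⟨s', hs', by rw [hts, hss', pow_succ, mul_assoc]⟩

theorem eq_zero_of_forall_exists_mem_eq_pow_mul {R : Type*} [NormedRing R] {S : Set R}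
    (hS : Bornology.IsBounded S) {r t : R} (hr : ‖r‖ < 1)
    (h : ∀ n : ℕ, ∃ s ∈ S, t = r ^ n * s) : t = 0 := by
  choose s hs hts using h
  obtain ⟨C, hC⟩ := hS.exists_norm_le
  have hs_bdd : IsBoundedUnder (· ≤ ·) atTop (norm ∘ s) :=
    isBoundedUnder_of ⟨C, fun n ↦ hC _ (hs n)⟩
  have hlim : Tendsto (fun n ↦ r ^ n * s n) atTop (𝓝 0) :=
    (tendsto_pow_atTop_nhds_zero_of_norm_lt_one hr).zero_mul_isBoundedUnder_le hs_bdd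
  simp only [← hts] at hlim
  exact tendsto_nhds_unique tendsto_const_nhds hlim

end Ladder

theorem mem_spectrum_one_sub_iff {R A : Type*} [CommRing R] [Ring A] [Algebra R A] {a : A} {t : R} :
    t ∈ spectrum R (1 - a) ↔ 1 - t ∈ spectrum R a := by
  rw [← map_one (algebraMap R A), ← spectrum.singleton_sub_eq, Set.singleton_sub]
  exact ⟨by rintro ⟨s, hs, rfl⟩; rwa [sub_sub_cancel], fun ht ↦ ⟨1 - t, ht, sub_sub_cancel 1 t⟩⟩

section Algebra

variable {𝕜 A : Type*} [Field 𝕜] [Ring A] [Algebra 𝕜 A] {a b : A} {r t : 𝕜}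

theorem mem_spectrum_one_sub_mul_comm (ht : t ≠ 1) :
    t ∈ spectrum 𝕜 (1 - a * b) ↔ t ∈ spectrum 𝕜 (1 - b * a) := by
  have ht' : 1 - t ≠ 0 := sub_ne_zero.mpr ht.symm
  have hdiff := Set.ext_iff.mp (spectrum.nonzero_mul_comm (𝕜 := 𝕜) a b) (1 - t)
  simpa only [mem_spectrum_one_sub_iff, Set.mem_sdiff, Set.mem_singleton_iff, ht',
    not_false_eq_true, and_true] using hdiff

theorem exists_mem_spectrum_eq_mul_of_mem_spectrum_smul
    (ht : t ∈ spectrum 𝕜 (r • a)) (ht0 : t ≠ 0) :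
    ∃ s ∈ spectrum 𝕜 a, t = r * s := by
  have hr : r ≠ 0 := by
    rintro rfl
    rw [zero_smul, spectrum.mem_iff, sub_zero] at ht
    exact ht (ht0.isUnit.map (algebraMap 𝕜 A))
  have hsmul : spectrum 𝕜 (r • a) = r • spectrum 𝕜 a :=
    spectrum.unit_smul_eq_smul a (Units.mk0 r hr)
  obtain ⟨s, hs, rfl⟩ := hsmul ▸ ht
  exact ⟨s, hs, rfl⟩

theorem exists_mem_spectrum_one_sub_mul_eq_mul (h : 1 - b * a = r • (1 - a * b))
    (ht : t ∈ spectrum 𝕜 (1 - a * b)) (ht1 : t ≠ 1) (ht0 : t ≠ 0) :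
    ∃ s ∈ spectrum 𝕜 (1 - a * b), t = r * s :=
  exists_mem_spectrum_eq_mul_of_mem_spectrum_smul
    (h ▸ (mem_spectrum_one_sub_mul_comm ht1).mp ht) ht0

end Algebra

section Normed

variable {𝕜 A : Type*} [NormedField 𝕜] [NormedRing A] [NormedAlgebra 𝕜 A] [CompleteSpace A]
  {a b : A} {r t : 𝕜}

theorem exists_eq_pow_of_mem_spectrum_one_sub_mul (hr : ‖r‖ < 1)
    (h : 1 - b * a = r • (1 - a * b)) (ht : t ∈ spectrum 𝕜 (1 - a * b)) (ht0 : t ≠ 0) :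
    ∃ n : ℕ, t = r ^ n := by
  by_contra! htr
  refine ht0 (eq_zero_of_forall_exists_mem_eq_pow_mul (spectrum.isBounded (1 - a * b)) hr ?_)
  exact exists_mem_eq_pow_mul (fun s ↦ exists_mem_spectrum_one_sub_mul_eq_mul h) ht ht0 htr

theorem exists_eq_pow_succ_of_mem_spectrum_one_sub_mul (hr : ‖r‖ < 1)
    (h : 1 - b * a = r • (1 - a * b)) (ht : t ∈ spectrum 𝕜 (1 - b * a)) (ht0 : t ≠ 0) :
    ∃ n : ℕ, t = r ^ (n + 1) := by
  obtain ⟨s, hs, rfl⟩ := exists_mem_spectrum_eq_mul_of_mem_spectrum_smul (h ▸ ht) ht0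
  obtain ⟨n, rfl⟩ :=
    exists_eq_pow_of_mem_spectrum_one_sub_mul hr h hs (right_ne_zero_of_mul ht0)
  exact ⟨n, (pow_succ' r n).symm⟩

theorem spectrum_of_qSphere_relation_general (hr : ‖r‖ < 1)
    (h : b * a = r • (a * b) + (1 - r) • (1 : A)) :
    spectrum 𝕜 (b * a) ⊆ {x : 𝕜 | ∃ n : ℕ, 1 ≤ n ∧ x = 1 - r ^ n} ∪ {1} ∧
    spectrum 𝕜 (a * b) ⊆ {x : 𝕜 | ∃ n : ℕ, x = 1 - r ^ n} ∪ {1} := by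
  have hsmul : 1 - b * a = r • (1 - a * b) := by
    rw [h]
    module
  have one_sub_mem {c : A} {x : 𝕜} (hx : x ∈ spectrum 𝕜 c) : 1 - x ∈ spectrum 𝕜 (1 - c) := by
    rwa [mem_spectrum_one_sub_iff, sub_sub_cancel]
  refine ⟨fun x hx ↦ or_iff_not_imp_right.mpr fun hx1 ↦ ?_,
    fun x hx ↦ or_iff_not_imp_right.mpr fun hx1 ↦ ?_⟩ <;>
    have hx0 : 1 - x ≠ 0 := sub_ne_zero.mpr (Ne.symm hx1)
  · obtain ⟨n, hn⟩ :=
      exists_eq_pow_succ_of_mem_spectrum_one_sub_mul hr hsmul (one_sub_mem hx) hx0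
    exact ⟨n + 1, n.succ_pos, by rw [← hn, sub_sub_cancel]⟩
  · obtain ⟨n, hn⟩ := exists_eq_pow_of_mem_spectrum_one_sub_mul hr hsmul (one_sub_mem hx) hx0
    exact ⟨n, by rw [← hn, sub_sub_cancel]⟩

end Normed

/-- In a unital C*-algebra, if `a* a = q² a a* + (1-q²) 1` with `q ∈ (0,1)`, then
`σ(a*a) ⊆ {1 - q^{2n} : n ≥ 1} ∪ {1}` and `σ(aa*) ⊆ {1 - q^{2n} : n ≥ 0} ∪ {1}`. -/
theorem spectrum_of_qSphere_relation {A : Type*} [NormedRing A] [StarRing A] [CStarRing A]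
    [NormedAlgebra ℂ A] [CompleteSpace A]
    (q : ℝ) (hq : q ∈ Set.Ioo (0 : ℝ) 1) (a : A)
    (h : star a * a = ((q : ℂ) ^ 2) • (a * star a) + (1 - (q : ℂ) ^ 2) • (1 : A)) :
    spectrum ℂ (star a * a) ⊆
        ({x : ℂ | ∃ n : ℕ, 1 ≤ n ∧ x = 1 - (q : ℂ) ^ (2 * n)} ∪ {1}) ∧
    spectrum ℂ (a * star a) ⊆
        ({x : ℂ | ∃ n : ℕ, x = 1 - (q : ℂ) ^ (2 * n)} ∪ {1}) := by
  have hr : ‖(q : ℂ) ^ 2‖ < 1 := by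
    rw [norm_pow, Complex.norm_of_nonneg hq.1.le]
    exact pow_lt_one₀ hq.1.le hq.2 two_ne_zero
  simpa only [pow_mul] using spectrum_of_qSphere_relation_general hr h
end

section
/- Let H be a complex Hilbert space, q ∈ (0,1), and Z₁, Z₂, Z₃, Z₄ bounded operators on H satisfying the Vaksman–Soibelman S_q^7 relations. Suppose ξ ∈ H satisfies Z₁Z₁*ξ = ξ and Z_iZ_i*ξ = 0 for i = 2, 3, 4. For n, m, k, r, t ∈ ℕ with k + m + t = r + n write v_{n,m,k} = Z₁^r (Z₁*)^t Z₂^k Z₃^m Z₄^n ξ. Let n₁, n₂, n₃, n₄, m₁, m₂, m₃, m₄ ∈ ℕ satisfy n₂ + n₃ + m₁ + m₄ = n₁ + n₄ + m₂ + m₃, and suppose m₂ + k ≥ n₂, m₃ + m ≥ n₃ and m₄ + n ≥ n₄. Then there exists a scalar c ∈ ℂ such that (Z₄*)^{n₄} (Z₃*)^{n₃} (Z₂*)^{n₂} (Z₁*)^{n₁} Z₁^{m₁} Z₂^{m₂} Z₃^{m₃} Z₄^{m₄} v_{n,m,k} = c · v_{m₄+n−n₄, m₃+m−n₃, m₂+k−n₂}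 (for any choice of the auxiliary exponents r', t' ∈ ℕ with (m₂+k−n₂) + (m₃+m−n₃) + t' = r' + (m₄+n−n₄) defining the right-hand vector). -/
/-- The Vaksman–Soibelman `S_q^7` relations for a 4-tuple of elements of a unital
complex *-algebra. -/
def VSRel {A : Type*} [Ring A] [StarRing A] [Algebra ℂ A] (q : ℝ) (z : Fin 4 → A) : Prop :=
  (∀ i j : Fin 4, i < j → z i * z j = (q : ℂ) • (z j * z i)) ∧
  (∀ i j : Fin 4, i ≠ j → star (z j) * z i = (q : ℂ) • (z i * star (z j))) ∧
  (∀ k : Fin 4, star (z k) * z k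
      = z k * star (z k) + (1 - (q : ℂ) ^ 2) • ∑ j ∈ Finset.Iio k, z j * star (z j)) ∧
  ∑ k : Fin 4, z k * star (z k) = 1

/-!
Call two elements *q-commuting* when they commute up to an invertible scalar. Distinct generators,
and a generator with the adjoint of a different one, q-commute; so does the partial sum
`∑ i < j, zᵢ zᵢ*` with `zₖ` for `k ≥ j`. Reading the vectors `v` projectively, the generator `zⱼ`
therefore slides through the preceding factors and raises the exponent of `zⱼ` by one. The adjoint
`zⱼ*` slides in the same way until it meets `zⱼ ^ s`; there
`zⱼ* zⱼ = zⱼ zⱼ* + (1 - q²) ∑ i < j, zᵢ zᵢ*` lowers the exponent, because `zⱼ*` annihilates the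
vector to the right and the partial sum has it as an eigenvector. Finally, `z₁ z₁*` acts on each `v`
by an invertible scalar, so only the difference of the two exponents of `z₁` and `z₁*` matters.
-/

section Lines

variable {R A M : Type*} [CommRing R] [Ring A] [Algebra R A] [AddCommGroup M] [Module R M]
  [Module A M] [IsScalarTower R A M]

theorem smul_mem_span_singleton_trans {a : A} {x y w : M} (hay : a • y ∈ R ∙ w)
    (hx : x ∈ R ∙ y) : a • x ∈ R ∙ w := by
  obtain ⟨c, rfl⟩ := Submodule.mem_span_singleton.mp hx
  rw [smul_algebra_smul_comm]
  exact Submodule.smul_mem _ c hay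

theorem pow_smul_mem_span_of_raises {a : A} {f : ℕ → M} (h : ∀ s, a • f s ∈ R ∙ f (s + 1))
    (n : ℕ) : a ^ n • f 0 ∈ R ∙ f n := by
  induction n with
  | zero => simp [Submodule.mem_span_singleton_self]
  | succ n ih =>
    rw [pow_succ', mul_smul]
    exact smul_mem_span_singleton_trans (h n) ih

theorem pow_smul_mem_span_of_lowers {a : A} {f : ℕ → M} (h : ∀ s, a • f (s + 1) ∈ R ∙ f s)
    (n : ℕ) : a ^ n • f n ∈ R ∙ f 0 := by
  induction n with
  | zero => simp [Submodule.mem_span_singleton_self]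
  | succ n ih =>
    rw [pow_succ, mul_smul]
    exact smul_mem_span_singleton_trans ih (h n)

end Lines

/-- Commutation up to an invertible scalar of `R`. The scalar is not recorded, so that the relation
is symmetric and stable under products and powers. -/
def QCommute (R : Type*) {A : Type*} [CommRing R] [Ring A] [Algebra R A] (a b : A) : Prop :=
  ∃ c : Rˣ, a * b = c • (b * a)

namespace QCommute

variable {R A M : Type*} [CommRing R] [Ring A] [Algebra R A] [AddCommGroup M] [Module R M]
  [Module A M] [IsScalarTower R A M] {a b c : A}

theorem symm (h : QCommute R a b) : QCommute R b a := by
  obtain ⟨u, h⟩ := h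
  exact ⟨u⁻¹, by rw [h, inv_smul_smul]⟩

theorem of_commute (h : Commute a b) : QCommute R a b := ⟨1, by rw [h.eq, one_smul]⟩

theorem mul_right (hb : QCommute R a b) (hc : QCommute R a c) : QCommute R a (b * c) := by
  obtain ⟨u, hb⟩ := hb
  obtain ⟨v, hc⟩ := hc
  refine ⟨u * v, ?_⟩
  rw [← mul_assoc, hb, smul_mul_assoc, mul_assoc, hc, mul_smul_comm, smul_smul, mul_assoc]

theorem mul_left (ha : QCommute R a c) (hb : QCommute R b c) : QCommute R (a * b) c :=
  (ha.symm.mul_right hb.symm).symm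

theorem list_prod_right {l : List A} (h : ∀ b ∈ l, QCommute R a b) : QCommute R a l.prod :=
  List.prod_induction _ (fun _ _ => mul_right) (of_commute (Commute.one_right a)) h

theorem pow_right (h : QCommute R a b) (n : ℕ) : QCommute R a (b ^ n) := by
  rw [← List.prod_replicate]
  exact list_prod_right fun _ hb => List.eq_of_mem_replicate hb ▸ h

theorem star_star [StarRing R] [StarRing A] [StarModule R A] (h : QCommute R a b) :
    QCommute R (star a) (star b) := by
  obtain ⟨u, h⟩ := h
  refine symm ⟨star u, ?_⟩
  rw [← star_mul, h, star_smul, star_mul]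

theorem exists_smul_smul_eq (h : QCommute R a b) :
    ∃ u : Rˣ, ∀ x : M, a • b • x = u • b • a • x := by
  obtain ⟨u, h⟩ := h
  exact ⟨u, fun x => by rw [smul_smul, h, Units.smul_def, smul_assoc, mul_smul, Units.smul_def]⟩

theorem smul_smul_eq_zero (h : QCommute R a b) {x : M} (hx : a • x = 0) : a • b • x = 0 := by
  obtain ⟨u, h⟩ := h.exists_smul_smul_eq (M := M)
  rw [h, hx, smul_zero, smul_zero]

theorem smul_smul_mem_span (h : QCommute R a b) {x y : M} (hxy : a • x ∈ R ∙ y) :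
    a • b • x ∈ R ∙ (b • y) := by
  obtain ⟨u, h⟩ := h.exists_smul_smul_eq (M := M)
  rw [h]
  exact Submodule.smul_mem _ (u : R)
    (smul_mem_span_singleton_trans (Submodule.mem_span_singleton_self _) hxy)

theorem smul_smul_mem_orbit (h : QCommute R a b) {x : M} (hx : a • x ∈ MulAction.orbit Rˣ x) :
    a • b • x ∈ MulAction.orbit Rˣ (b • x) := by
  obtain ⟨u, h⟩ := h.exists_smul_smul_eq (M := M)
  obtain ⟨v, hx : v • x = a • x⟩ := hx
  refine ⟨u * v, show (u * v) • b • x = _ from ?_⟩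
  rw [h, ← hx, mul_smul, Units.smul_def v, Units.smul_def v, smul_algebra_smul_comm]

theorem smul_pow_succ_smul_mem_span {s : R} {k : A} (hab : a * b = b * a + s • k)
    (hk : QCommute R k b) {x : M} (hax : a • x = 0) (hkx : k • x ∈ R ∙ x) (n : ℕ) :
    a • b ^ (n + 1) • x ∈ R ∙ (b ^ n • x) := by
  have commute_past (y : M) : a • b • y = b • a • y + s • k • y := by
    rw [smul_smul, hab, add_smul, mul_smul, smul_assoc]
  have eigen (n : ℕ) : s • k • b ^ n • x ∈ R ∙ (b ^ n • x) :=
    Submodule.smul_mem _ s ((hk.pow_right n).smul_smul_mem_span hkx)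
  induction n with
  | zero => simpa [commute_past, hax] using eigen 0
  | succ n ih =>
    rw [pow_succ' b (n + 1), mul_smul, commute_past]
    refine Submodule.add_mem _ (smul_mem_span_singleton_trans ?_ ih) (eigen (n + 1))
    rw [smul_smul, ← pow_succ']
    exact Submodule.mem_span_singleton_self _

end QCommute

section OrderedMonomial

variable {ι A : Type*}

/-- The product of the powers `z i ^ κ i`, taken in the order in which the indices occur in `l`. -/
def orderedMonomial [Monoid A] (z : ι → A) (κ : ι → ℕ) (l : List ι) : A :=
  (l.map fun i => z i ^ κ i).prod

theorem orderedMonomial_cons [Monoid A] (z : ι → A) (κ : ι → ℕ) (i : ι) (l : List ι) :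
    orderedMonomial z κ (i :: l) = z i ^ κ i * orderedMonomial z κ l :=
  List.prod_cons

theorem orderedMonomial_congr [Monoid A] (z : ι → A) {κ κ' : ι → ℕ} {l : List ι}
    (h : ∀ i ∈ l, κ i = κ' i) : orderedMonomial z κ l = orderedMonomial z κ' l :=
  congrArg List.prod (List.map_congr_left fun i hi => by rw [h i hi])

theorem orderedMonomial_append_cons_add_single [Monoid A] [DecidableEq ι] (z : ι → A) (κ : ι → ℕ)
    {l₁ l₂ : List ι} {j : ι} (h₁ : j ∉ l₁) (h₂ : j ∉ l₂) (s : ℕ) :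
    orderedMonomial z (κ + Pi.single j s) (l₁ ++ j :: l₂) =
      orderedMonomial z κ l₁ * (z j ^ (κ j + s) * orderedMonomial z κ l₂) := by
  have unchanged {l : List ι} (hl : j ∉ l) :
      orderedMonomial z (κ + Pi.single j s) l = orderedMonomial z κ l :=
    orderedMonomial_congr z fun i hi => by simp [ne_of_mem_of_not_mem hi hl]
  rw [← unchanged h₁, ← unchanged h₂]
  simp [orderedMonomial]

theorem list_sum_map_single_apply {N : Type*} [AddCommMonoid N] [DecidableEq ι] {l : List ι}
    (hl : l.Nodup) (m : ι → N) {i : ι} (hi : i ∈ l) :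
    (l.map fun j => Pi.single j (m j)).sum i = m i := by
  rw [← List.sum_toFinset _ hl, Finset.sum_apply, Finset.sum_pi_single,
    if_pos (List.mem_toFinset.mpr hi)]

theorem QCommute.orderedMonomial_right {R : Type*} [CommRing R] [Ring A] [Algebra R A] {a : A}
    {z : ι → A} {l : List ι} (h : ∀ i ∈ l, QCommute R a (z i)) (κ : ι → ℕ) :
    QCommute R a (orderedMonomial z κ l) :=
  QCommute.list_prod_right <| by
    simpa only [List.forall_mem_map] using fun i hi => (h i hi).pow_right (κ i)

end OrderedMonomial

/-- The commutation relations of the Vaksman–Soibelman quantum spheres, for a family of generators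
indexed by an arbitrary linear order with finite initial segments; the relation that fixes the
radius is not included. -/
structure QSphereCommutation {R ι A : Type*} [CommRing R] [Ring A] [StarRing A] [Algebra R A]
    [LinearOrder ι] [LocallyFiniteOrderBot ι] (q : Rˣ) (z : ι → A) : Prop where
  mul_of_lt : ∀ ⦃i j⦄, i < j → z i * z j = q • (z j * z i)
  star_mul_of_ne : ∀ ⦃i j⦄, i ≠ j → star (z i) * z j = q • (z j * star (z i))
  star_mul_self : ∀ k, star (z k) * z k =
    z k * star (z k) + (1 - (q : R) ^ 2) • ∑ i ∈ Finset.Iio k, z i * star (z i)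

/-- A vacuum vector of a representation of a quantum sphere: it is annihilated by the adjoints of
all generators but the first, and `z₁ z₁*` acts on it by an invertible scalar. -/
structure IsQSphereVacuum (R : Type*) {ι A M : Type*} [CommRing R] [Ring A] [Star A]
    [AddCommGroup M] [Module R M] [Module A M] [LinearOrder ι] [OrderBot ι] (z : ι → A) (ξ : M) :
    Prop where
  bot_mul_star_smul : (z ⊥ * star (z ⊥)) • ξ ∈ MulAction.orbit Rˣ ξ
  star_smul : ∀ ⦃i⦄, i ≠ ⊥ → star (z i) • ξ = 0

/-- The vector `z₁^r (z₁*)^t (∏ i ∈ l, zᵢ ^ κ i) ξ`, with `⊥` the index of `z₁`. For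
`l = [2, 3, 4]` and `κ = (k, m, n)` this is `v_{n,m,k}`. -/
def qSphereVector {ι A M : Type*} [Ring A] [Star A] [AddCommGroup M] [Module A M]
    [LinearOrder ι] [OrderBot ι] (z : ι → A) (l : List ι) (ξ : M) (r t : ℕ) (κ : ι → ℕ) : M :=
  (z ⊥ ^ r * star (z ⊥) ^ t * orderedMonomial z κ l) • ξ

theorem qSphereVector_congr {ι A M : Type*} [Ring A] [Star A] [AddCommGroup M] [Module A M]
    [LinearOrder ι] [OrderBot ι] (z : ι → A) {l : List ι} (ξ : M) (r t : ℕ) {κ κ' : ι → ℕ}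
    (h : ∀ i ∈ l, κ i = κ' i) : qSphereVector z l ξ r t κ = qSphereVector z l ξ r t κ' := by
  rw [qSphereVector, qSphereVector, orderedMonomial_congr z h]

theorem bot_pow_smul_qSphereVector {ι A M : Type*} [Ring A] [Star A] [AddCommGroup M] [Module A M]
    [LinearOrder ι] [OrderBot ι] (z : ι → A) (l : List ι) (ξ : M) (m r t : ℕ) (κ : ι → ℕ) :
    z ⊥ ^ m • qSphereVector z l ξ r t κ = qSphereVector z l ξ (m + r) t κ := by
  simp only [qSphereVector, smul_smul, pow_add, mul_assoc]

theorem IsQSphereVacuum.sum_Iio_smul {R ι A M : Type*} [CommRing R] [Ring A] [Star A]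
    [AddCommGroup M] [Module R M] [Module A M] [LinearOrder ι] [LocallyFiniteOrderBot ι]
    [OrderBot ι] {z : ι → A} {ξ : M} (hξ : IsQSphereVacuum R z ξ) {j : ι} (hj : ⊥ < j) :
    (∑ i ∈ Finset.Iio j, z i * star (z i)) • ξ = (z ⊥ * star (z ⊥)) • ξ := by
  rw [Finset.sum_smul]
  refine Finset.sum_eq_single_of_mem _ (Finset.mem_Iio.mpr hj) fun i _ hi => ?_
  rw [mul_smul, hξ.star_smul hi, smul_zero]

namespace QSphereCommutation

section Relations

variable {R ι A : Type*} [CommRing R] [Ring A] [StarRing A] [Algebra R A]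
  [LinearOrder ι] [LocallyFiniteOrderBot ι] {q : Rˣ} {z : ι → A} {i j k : ι}

theorem qCommute (h : QSphereCommutation q z) (hij : i ≠ j) : QCommute R (z i) (z j) :=
  hij.lt_or_gt.elim (fun hlt => ⟨q, h.mul_of_lt hlt⟩)
    fun hgt => QCommute.symm ⟨q, h.mul_of_lt hgt⟩

theorem qCommute_star_left (h : QSphereCommutation q z) (hij : i ≠ j) :
    QCommute R (star (z i)) (z j) :=
  ⟨q, h.star_mul_of_ne hij⟩

theorem qCommute_star_star [StarRing R] [StarModule R A] (h : QSphereCommutation q z)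
    (hij : i ≠ j) : QCommute R (star (z i)) (star (z j)) :=
  (h.qCommute hij).star_star

theorem mul_star_mul_of_lt (h : QSphereCommutation q z) (hij : i < j) :
    z i * star (z i) * z j = q ^ 2 • (z j * (z i * star (z i))) := by
  rw [mul_assoc, h.star_mul_of_ne hij.ne, mul_smul_comm, ← mul_assoc, h.mul_of_lt hij,
    smul_mul_assoc, smul_smul, ← sq, mul_assoc]

theorem qCommute_sum_Iio (h : QSphereCommutation q z) (hjk : j ≤ k) :
    QCommute R (∑ i ∈ Finset.Iio j, z i * star (z i)) (z k) := by
  refine ⟨q ^ 2, ?_⟩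
  rw [Finset.sum_mul, Finset.mul_sum, Finset.smul_sum]
  exact Finset.sum_congr rfl fun i hi =>
    h.mul_star_mul_of_lt ((Finset.mem_Iio.mp hi).trans_le hjk)

theorem commute_star_bot [OrderBot ι] (h : QSphereCommutation q z) :
    Commute (star (z ⊥)) (z ⊥) := by
  simpa [commute_iff_eq] using h.star_mul_self ⊥

end Relations

section Vectors

variable {R ι A M : Type*} [CommRing R] [Ring A] [StarRing A] [Algebra R A] [AddCommGroup M]
  [Module A M] [LinearOrder ι] [LocallyFiniteOrderBot ι] [OrderBot ι] {q : Rˣ} {z : ι → A}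
  {l : List ι} {ξ : M}

theorem star_bot_pow_smul_qSphereVector (h : QSphereCommutation q z) (n r t : ℕ) (κ : ι → ℕ) :
    star (z ⊥) ^ n • qSphereVector z l ξ r t κ = qSphereVector z l ξ r (n + t) κ := by
  simp only [qSphereVector, smul_smul, pow_add, ← mul_assoc, (h.commute_star_bot.pow_pow n r).eq]

variable [Module R M] [IsScalarTower R A M]

theorem qSphereVector_succ_succ_mem_orbit (h : QSphereCommutation q z) (hξ : IsQSphereVacuum R z ξ)
    (hl : ∀ i ∈ l, ⊥ < i) (r t : ℕ) (κ : ι → ℕ) :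
    qSphereVector z l ξ (r + 1) (t + 1) κ ∈ MulAction.orbit Rˣ (qSphereVector z l ξ r t κ) := by
  have move_bot : z ⊥ ^ (r + 1) * star (z ⊥) ^ (t + 1) =
      z ⊥ * star (z ⊥) * (z ⊥ ^ r * star (z ⊥) ^ t) := by
    rw [pow_succ', pow_succ', (h.commute_star_bot.symm.pow_left r).mul_mul_mul_comm]
  have qCommute_bot : QCommute R (z ⊥) (star (z ⊥)) := .of_commute h.commute_star_bot.symm
  have qCommute_word : QCommute R (z ⊥ * star (z ⊥))
      (z ⊥ ^ r * star (z ⊥) ^ t * orderedMonomial z κ l) :=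
    ((((QCommute.of_commute (.refl _)).mul_left qCommute_bot.symm).pow_right r).mul_right
      ((qCommute_bot.mul_left (.of_commute (.refl _))).pow_right t)).mul_right
      (.orderedMonomial_right
        (fun i hi => (h.qCommute (hl i hi).ne).mul_left (h.qCommute_star_left (hl i hi).ne)) κ)
  have := qCommute_word.smul_smul_mem_orbit hξ.bot_mul_star_smul
  rwa [smul_smul, ← mul_assoc, ← move_bot] at this

theorem orbit_qSphereVector_add_add (h : QSphereCommutation q z) (hξ : IsQSphereVacuum R z ξ)
    (hl : ∀ i ∈ l, ⊥ < i) (r t : ℕ) (κ : ι → ℕ) (s : ℕ) :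
    MulAction.orbit Rˣ (qSphereVector z l ξ (r + s) (t + s) κ) =
      MulAction.orbit Rˣ (qSphereVector z l ξ r t κ) := by
  induction s with
  | zero => rfl
  | succ s ih =>
    rw [← ih, MulAction.orbit_eq_iff]
    exact h.qSphereVector_succ_succ_mem_orbit hξ hl _ _ κ

theorem qSphereVector_mem_span_of_add_eq (h : QSphereCommutation q z) (hξ : IsQSphereVacuum R z ξ)
    (hl : ∀ i ∈ l, ⊥ < i) {r t r' t' : ℕ} (hrt : r + t' = r' + t) (κ : ι → ℕ) :
    qSphereVector z l ξ r t κ ∈ R ∙ qSphereVector z l ξ r' t' κ := by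
  have orbit_eq : MulAction.orbit Rˣ (qSphereVector z l ξ r t κ) =
      MulAction.orbit Rˣ (qSphereVector z l ξ r' t' κ) := by
    rw [← h.orbit_qSphereVector_add_add hξ hl r t κ t',
      ← h.orbit_qSphereVector_add_add hξ hl r' t' κ t, hrt, add_comm t t']
  obtain ⟨u, hu⟩ := MulAction.orbit_eq_iff.mp orbit_eq
  exact Submodule.mem_span_singleton.mpr ⟨u, hu⟩

variable [StarRing R] [StarModule R A]

/-- Isolates the factor `zⱼ ^ (κ j + s)`: the prefix `p` can be crossed by `zⱼ` and by `zⱼ*`, and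
the vector `x` to its right is the bottom of the ladder along which they move. -/
theorem exists_qSphereVector_add_single_eq (h : QSphereCommutation q z) (hξ : IsQSphereVacuum R z ξ)
    (hl : (⊥ :: l).Pairwise (· < ·)) {j : ι} (hj : j ∈ l) (r t : ℕ) (κ : ι → ℕ) :
    ∃ (p : A) (x : M),
      (∀ s, qSphereVector z l ξ r t (κ + Pi.single j s) = p • z j ^ (κ j + s) • x) ∧
      QCommute R (z j) p ∧ QCommute R (star (z j)) p ∧ star (z j) • x = 0 ∧
      (∑ i ∈ Finset.Iio j, z i * star (z i)) • x ∈ R ∙ x := by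
  obtain ⟨bot_lt, sorted⟩ := List.pairwise_cons.mp hl
  obtain ⟨l₁, l₂, rfl⟩ := List.append_of_mem hj
  have bot_ne : j ≠ ⊥ := (bot_lt j hj).ne'
  obtain ⟨-, sorted₂, lt_cons⟩ := List.pairwise_append.mp sorted
  have lt_j : ∀ i ∈ l₁, i < j := fun i hi => lt_cons i hi j List.mem_cons_self
  have j_lt : ∀ i ∈ l₂, j < i := (List.pairwise_cons.mp sorted₂).1
  refine ⟨z ⊥ ^ r * star (z ⊥) ^ t * orderedMonomial z κ l₁, orderedMonomial z κ l₂ • ξ,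
    fun s => ?_, ?_, ?_, ?_, ?_⟩
  · rw [qSphereVector, orderedMonomial_append_cons_add_single z κ (fun hm => (lt_j j hm).false)
      fun hm => (j_lt j hm).false]
    simp only [smul_smul, mul_assoc]
  · exact (((h.qCommute bot_ne).pow_right r).mul_right
      ((h.qCommute_star_left bot_ne.symm).symm.pow_right t)).mul_right
      (.orderedMonomial_right (fun i hi => h.qCommute (lt_j i hi).ne') κ)
  · exact (((h.qCommute_star_left bot_ne).pow_right r).mul_right
      ((h.qCommute_star_star bot_ne).pow_right t)).mul_right
      (.orderedMonomial_right (fun i hi => h.qCommute_star_left (lt_j i hi).ne') κ)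
  · exact (QCommute.orderedMonomial_right (R := R)
      (fun i hi => h.qCommute_star_left (j_lt i hi).ne) κ).smul_smul_eq_zero (hξ.star_smul bot_ne)
  · refine (QCommute.orderedMonomial_right
      (fun i hi => h.qCommute_sum_Iio (j_lt i hi).le) κ).smul_smul_mem_span ?_
    obtain ⟨u, hu⟩ := hξ.bot_mul_star_smul
    rw [hξ.sum_Iio_smul (bot_lt j hj)]
    exact Submodule.mem_span_singleton.mpr ⟨u, hu⟩

theorem pow_smul_qSphereVector_mem_span (h : QSphereCommutation q z) (hξ : IsQSphereVacuum R z ξ)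
    (hl : (⊥ :: l).Pairwise (· < ·)) {j : ι} (hj : j ∈ l) (r t n : ℕ) (κ : ι → ℕ) :
    z j ^ n • qSphereVector z l ξ r t κ ∈ R ∙ qSphereVector z l ξ r t (κ + Pi.single j n) := by
  obtain ⟨p, x, vector_eq, hp, -⟩ := h.exists_qSphereVector_add_single_eq hξ hl hj r t κ
  let f (s : ℕ) : M := qSphereVector z l ξ r t (κ + Pi.single j s)
  have raises (s : ℕ) : z j • f s ∈ R ∙ f (s + 1) := by
    simp only [f, vector_eq]
    refine hp.smul_smul_mem_span ?_
    rw [smul_smul, ← pow_succ', add_assoc]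
    exact Submodule.mem_span_singleton_self _
  simpa [f] using pow_smul_mem_span_of_raises raises n

theorem star_pow_smul_qSphereVector_mem_span (h : QSphereCommutation q z)
    (hξ : IsQSphereVacuum R z ξ) (hl : (⊥ :: l).Pairwise (· < ·)) {j : ι} (hj : j ∈ l) (r t n : ℕ)
    (κ : ι → ℕ) :
    star (z j) ^ n • qSphereVector z l ξ r t (κ + Pi.single j n) ∈
      R ∙ qSphereVector z l ξ r t κ := by
  obtain ⟨p, x, vector_eq, -, hp, hx, hSx⟩ := h.exists_qSphereVector_add_single_eq hξ hl hj r t κ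
  let f (s : ℕ) : M := qSphereVector z l ξ r t (κ + Pi.single j s)
  have lowers (s : ℕ) : star (z j) • f (s + 1) ∈ R ∙ f s := by
    simp only [f, vector_eq]
    exact hp.smul_smul_mem_span <| QCommute.smul_pow_succ_smul_mem_span (h.star_mul_self j)
      (h.qCommute_sum_Iio le_rfl) hx hSx (κ j + s)
  simpa [f] using pow_smul_mem_span_of_lowers lowers n

theorem orderedMonomial_smul_qSphereVector_mem_span (h : QSphereCommutation q z)
    (hξ : IsQSphereVacuum R z ξ) (hl : (⊥ :: l).Pairwise (· < ·)) (r t : ℕ) (κ m : ι → ℕ)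
    {l' : List ι} (hl' : l' ⊆ l) :
    orderedMonomial z m l' • qSphereVector z l ξ r t κ ∈
      R ∙ qSphereVector z l ξ r t (κ + (l'.map fun i => Pi.single i (m i)).sum) := by
  induction l' with
  | nil => simp [orderedMonomial, Submodule.mem_span_singleton_self]
  | cons i l' ih =>
    obtain ⟨hi, hl'⟩ := List.cons_subset.mp hl'
    rw [orderedMonomial_cons, mul_smul, List.map_cons, List.sum_cons, add_comm (Pi.single _ _),
      ← add_assoc]
    exact smul_mem_span_singleton_trans (h.pow_smul_qSphereVector_mem_span hξ hl hi r t _ _)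
      (ih hl')

theorem star_orderedMonomial_smul_qSphereVector_mem_span (h : QSphereCommutation q z)
    (hξ : IsQSphereVacuum R z ξ) (hl : (⊥ :: l).Pairwise (· < ·)) (r t : ℕ) (κ n : ι → ℕ)
    {l' : List ι} (hl' : l' ⊆ l) :
    star (orderedMonomial z n l') •
        qSphereVector z l ξ r t (κ + (l'.map fun i => Pi.single i (n i)).sum) ∈
      R ∙ qSphereVector z l ξ r t κ := by
  induction l' with
  | nil => simp [orderedMonomial, Submodule.mem_span_singleton_self]
  | cons i l' ih =>
    obtain ⟨hi, hl'⟩ := List.cons_subset.mp hl'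
    rw [orderedMonomial_cons, star_mul, star_pow, mul_smul, List.map_cons, List.sum_cons,
      add_comm (Pi.single _ _), ← add_assoc]
    exact smul_mem_span_singleton_trans (ih hl')
      (h.star_pow_smul_qSphereVector_mem_span hξ hl hi r t _ _)

end Vectors

end QSphereCommutation

theorem monomial_maps_eigenvectors_qSphere_general {R ι A M : Type*} [CommRing R] [StarRing R]
    [Ring A] [StarRing A] [Algebra R A] [StarModule R A] [AddCommGroup M] [Module R M] [Module A M]
    [IsScalarTower R A M] [LinearOrder ι] [LocallyFiniteOrderBot ι] [OrderBot ι] {q : Rˣ}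
    {z : ι → A} (h : QSphereCommutation q z) {ξ : M} (hξ : IsQSphereVacuum R z ξ) {l : List ι}
    (hl : (⊥ :: l).Pairwise (· < ·)) {r t r' t' : ℕ} {κ κ' m n : ι → ℕ}
    (hκ : ∀ i ∈ l, κ i + m i = κ' i + n i) (hrt : m ⊥ + r + t' = r' + (n ⊥ + t)) :
    (star (orderedMonomial z n (⊥ :: l)) * orderedMonomial z m (⊥ :: l)) •
        qSphereVector z l ξ r t κ ∈ R ∙ qSphereVector z l ξ r' t' κ' := by
  have nodup : l.Nodup := (List.pairwise_cons.mp hl).2.imp ne_of_lt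
  have bot_moves : (star (z ⊥) ^ n ⊥ * z ⊥ ^ m ⊥) •
        qSphereVector z l ξ r t (κ + (l.map fun i => Pi.single i (m i)).sum) =
      qSphereVector z l ξ (m ⊥ + r) (n ⊥ + t) (κ' + (l.map fun i => Pi.single i (n i)).sum) := by
    rw [mul_smul, bot_pow_smul_qSphereVector, h.star_bot_pow_smul_qSphereVector]
    exact qSphereVector_congr z ξ _ _ fun i hi => by
      simp only [Pi.add_apply, list_sum_map_single_apply nodup _ hi, hκ i hi]
  have raised := h.orderedMonomial_smul_qSphereVector_mem_span hξ hl r t κ m (List.Subset.refl l)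
  have lowered : (star (orderedMonomial z n l) * (star (z ⊥) ^ n ⊥ * z ⊥ ^ m ⊥)) •
        qSphereVector z l ξ r t (κ + (l.map fun i => Pi.single i (m i)).sum) ∈
      R ∙ qSphereVector z l ξ (m ⊥ + r) (n ⊥ + t) κ' := by
    rw [mul_smul, bot_moves]
    exact h.star_orderedMonomial_smul_qSphereVector_mem_span hξ hl _ _ κ' n (List.Subset.refl l)
  have mapped := smul_mem_span_singleton_trans lowered raised
  rw [smul_smul] at mapped
  rw [orderedMonomial_cons, orderedMonomial_cons, star_mul, star_pow]
  simp only [mul_assoc] at mapped ⊢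
  exact Submodule.mem_span_singleton_trans mapped
    (h.qSphereVector_mem_span_of_add_eq hξ (List.pairwise_cons.mp hl).1 hrt κ')

theorem IsQSphereVacuum.of_mul_star_apply {𝕜 ι H : Type*} [RCLike 𝕜] [NormedAddCommGroup H]
    [InnerProductSpace 𝕜 H] [CompleteSpace H] [LinearOrder ι] [OrderBot ι] {z : ι → H →L[𝕜] H}
    {ξ : H} (hbot : (z ⊥ * star (z ⊥)) ξ = ξ) (hne : ∀ i ≠ ⊥, (z i * star (z i)) ξ = 0) :
    IsQSphereVacuum 𝕜 z ξ where
  bot_mul_star_smul := ⟨1, by simpa using hbot.symm⟩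
  star_smul i hi :=
    (ContinuousLinearMap.ker_self_comp_adjoint (z i)).le (LinearMap.mem_ker.mpr (hne i hi))

theorem VSRel.qSphereCommutation {A : Type*} [Ring A] [StarRing A] [Algebra ℂ A] {q : ℝ}
    {z : Fin 4 → A} (h : VSRel q z) (hq : (q : ℂ) ≠ 0) :
    QSphereCommutation (Units.mk0 (q : ℂ) hq) z where
  mul_of_lt := h.1
  star_mul_of_ne i j hij := h.2.1 j i hij.symm
  star_mul_self := h.2.2.1

/-- The monomial `(Z₄*)^{n₄}(Z₃*)^{n₃}(Z₂*)^{n₂}(Z₁*)^{n₁}Z₁^{m₁}Z₂^{m₂}Z₃^{m₃}Z₄^{m₄}`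
maps `v_{n,m,k}` to a scalar multiple of `v_{m₄+n-n₄, m₃+m-n₃, m₂+k-n₂}`. -/
theorem monomial_maps_eigenvectors_qSphere {H : Type*} [NormedAddCommGroup H]
    [InnerProductSpace ℂ H] [CompleteSpace H] (q : ℝ) (hq : q ∈ Set.Ioo (0 : ℝ) 1)
    (Z₁ Z₂ Z₃ Z₄ : H →L[ℂ] H) (hVS : VSRel q ![Z₁, Z₂, Z₃, Z₄]) (ξ : H)
    (h1 : (Z₁ * star Z₁) ξ = ξ) (h2 : (Z₂ * star Z₂) ξ = 0)
    (h3 : (Z₃ * star Z₃) ξ = 0) (h4 : (Z₄ * star Z₄) ξ = 0)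
    (n m k r t : ℕ) (hrt : k + m + t = r + n)
    (n₁ n₂ n₃ n₄ m₁ m₂ m₃ m₄ : ℕ)
    (hbal : n₂ + n₃ + m₁ + m₄ = n₁ + n₄ + m₂ + m₃)
    (h2' : n₂ ≤ m₂ + k) (h3' : n₃ ≤ m₃ + m) (h4' : n₄ ≤ m₄ + n) :
    ∀ r' t' : ℕ,
      (m₂ + k - n₂) + (m₃ + m - n₃) + t' = r' + (m₄ + n - n₄) →
      ∃ c : ℂ,
        ((star Z₄) ^ n₄ * (star Z₃) ^ n₃ * (star Z₂) ^ n₂ * (star Z₁) ^ n₁ *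
            Z₁ ^ m₁ * Z₂ ^ m₂ * Z₃ ^ m₃ * Z₄ ^ m₄)
          ((Z₁ ^ r * (star Z₁) ^ t * Z₂ ^ k * Z₃ ^ m * Z₄ ^ n) ξ)
        = c • ((Z₁ ^ r' * (star Z₁) ^ t' * Z₂ ^ (m₂ + k - n₂) * Z₃ ^ (m₃ + m - n₃) *
            Z₄ ^ (m₄ + n - n₄)) ξ) := by
  intro r' t' hrt'
  have : IsScalarTower ℂ (H →L[ℂ] H) H := ⟨fun _ _ _ => rfl⟩
  have hZ := hVS.qSphereCommutation (Complex.ofReal_ne_zero.mpr hq.1.ne')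
  have hξ : IsQSphereVacuum ℂ ![Z₁, Z₂, Z₃, Z₄] ξ :=
    .of_mul_star_apply h1 (by simpa [Fin.forall_fin_succ, bot_eq_zero] using ⟨h2, h3, h4⟩)
  obtain ⟨c, hc⟩ := Submodule.mem_span_singleton.mp <|
    monomial_maps_eigenvectors_qSphere_general hZ hξ (l := [1, 2, 3]) (by decide)
      (κ := ![0, k, m, n]) (κ' := ![0, m₂ + k - n₂, m₃ + m - n₃, m₄ + n - n₄])
      (m := ![m₁, m₂, m₃, m₄]) (n := ![n₁, n₂, n₃, n₄]) (r := r) (t := t) (r' := r') (t' := t')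
      (by simp; omega) (by simp [bot_eq_zero]; omega)
  exact ⟨c, by simpa [qSphereVector, orderedMonomial, bot_eq_zero] using hc.symm⟩
end

section
/- Let A be a unital C*-algebra, q ∈ (0,1), and z₁, z₂, z₃, z₄ ∈ A elements satisfying the Vaksman–Soibelman S_q^7 relations. With the coefficients c_{j}(N) defined by c_{0,0,0,0}(0) = 1 and the recursion c_{j₁,j₂,j₃,j₄}(N+1) = q⁴q^{2(j₂+j₃−j₄)} c_{j₁−1,j₂,j₃,j₄}(N) + q²q^{2(j₃−j₄)} c_{j₁,j₂−1,j₃,j₄}(N) + q^{−2j₄} c_{j₁,j₂,j₃−1,j₄}(N) + c_{j₁,j₂,j₃,j₄−1}(N) (terms with a negative index being 0), all c_j(N) are nonnegative, and for every N ∈ ℕ the matrix P_N, indexed by multi-indices j = (j₁,j₂,j₃,j₄) ∈ ℕ⁴ with j₁+j₂+j₃+j₄ = N and with entries (P_N)_{j,j'} = ψ_j ψ_{j'}*, where ψ_j = √(c_j(N)) · (z₄*)^{j₄} z₃^{j₃} z₂^{j₂} (z₁*)^{j₁}, is a projection: P_N² = P_N and P_N* = P_N. -/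
/-- The recursively defined coefficients `c_{j₁,j₂,j₃,j₄}(N)`: `c_{0,0,0,0}(0) = 1`,
any coefficient with a negative index vanishes, and
`c_{j₁,j₂,j₃,j₄}(N+1) = q⁴q^{2(j₂+j₃-j₄)} c_{j₁-1,j₂,j₃,j₄}(N)
  + q²q^{2(j₃-j₄)} c_{j₁,j₂-1,j₃,j₄}(N) + q^{-2j₄} c_{j₁,j₂,j₃-1,j₄}(N)
  + c_{j₁,j₂,j₃,j₄-1}(N)`. -/
noncomputable def coef (q : ℝ) : ℕ → ℤ → ℤ → ℤ → ℤ → ℝ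
  | 0, j₁, j₂, j₃, j₄ => if j₁ = 0 ∧ j₂ = 0 ∧ j₃ = 0 ∧ j₄ = 0 then 1 else 0
  | N + 1, j₁, j₂, j₃, j₄ =>
      q ^ 4 * q ^ (2 * (j₂ + j₃ - j₄)) * coef q N (j₁ - 1) j₂ j₃ j₄
        + q ^ 2 * q ^ (2 * (j₃ - j₄)) * coef q N j₁ (j₂ - 1) j₃ j₄
        + q ^ (-2 * j₄) * coef q N j₁ j₂ (j₃ - 1) j₄
        + coef q N j₁ j₂ j₃ (j₄ - 1)

/-- `ψ_j = √(c_j(N)) (z₄*)^{j₄} z₃^{j₃} z₂^{j₂} (z₁*)^{j₁}`. -/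
noncomputable def psiVec {A : Type*} [Ring A] [Algebra ℂ A] [StarRing A]
    (q : ℝ) (z₁ z₂ z₃ z₄ : A) (N : ℕ) (j : Fin 4 → ℕ) : A :=
  ((Real.sqrt (coef q N (j 0) (j 1) (j 2) (j 3)) : ℝ) : ℂ) •
    ((star z₄) ^ (j 3) * z₃ ^ (j 2) * z₂ ^ (j 1) * (star z₁) ^ (j 0))

/-- The matrix `P_N` indexed by the multi-indices `j` with `j₁+j₂+j₃+j₄ = N`, with
entries `(P_N)_{j,j'} = ψ_j ψ_{j'}*`. -/
noncomputable def projMat {A : Type*} [Ring A] [Algebra ℂ A] [StarRing A]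
    (q : ℝ) (z₁ z₂ z₃ z₄ : A) (N : ℕ) :
    Matrix (Finset.Nat.antidiagonalTuple 4 N) (Finset.Nat.antidiagonalTuple 4 N) A :=
  Matrix.of fun j j' =>
    psiVec q z₁ z₂ z₃ z₄ N j * star (psiVec q z₁ z₂ z₃ z₄ N j')

/-!
Put `x = (z₁*, z₂, z₃, z₄*)`. The relations of `S_q^7` give `∑ᵢ wᵢ xᵢ* xᵢ = 1` with
`w = (q⁴, q², 1, 1)`, and they let each `xᵢ` be moved into its place in the monomial
`X_k = x₄^{k₄} x₃^{k₃} x₂^{k₂} x₁^{k₁}`, so that `xᵢ X_k = s_{i,k} X_{k + eᵢ}` for a scalar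
`s_{i,k}`. Inserting the first identity into `X_k* X_k` therefore gives
`X_k* X_k = ∑ᵢ wᵢ s_{i,k}² X_{k + eᵢ}* X_{k + eᵢ}`, and the recursion for `c_j(N)` is exactly the
one that propagates `∑_j c_j(N) X_j* X_j = 1` from `N` to `N + 1`. Thus `ψ = (√c_j(N) X_j)_j`
satisfies `∑_j ψ_j* ψ_j = 1`, and `P_N = ψ ψ*` is a projection.
-/

open Finset
open scoped Matrix

theorem isStarProjection_vecMulVec_star {ι A : Type*} [Fintype ι] [Semiring A] [StarRing A]
    {ψ : ι → A} (hψ : star ψ ⬝ᵥ ψ = 1) : IsStarProjection (Matrix.vecMulVec ψ (star ψ)) where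
  isIdempotentElem := by
    rw [IsIdempotentElem, Matrix.vecMulVec_mul_vecMulVec, hψ, one_smul]
  isSelfAdjoint := by
    rw [IsSelfAdjoint, Matrix.star_eq_conjTranspose, Matrix.conjTranspose_vecMulVec, star_star]

theorem starModule_real_of_continuousStar {A : Type*} [AddCommGroup A] [StarAddMonoid A]
    [Module ℝ A] [TopologicalSpace A] [T2Space A] [ContinuousSMul ℝ A] [ContinuousStar A] :
    StarModule ℝ A where
  star_smul r a := map_real_smul (starAddEquiv : A ≃+ A) continuous_star r a

theorem single_one_le_iff {ι : Type*} [DecidableEq ι] {j : ι → ℕ} {i : ι} :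
    Pi.single i 1 ≤ j ↔ j i ≠ 0 := by
  simp [Pi.single, update_le_iff, Nat.one_le_iff_ne_zero]

theorem tsub_single_add_single {ι : Type*} [DecidableEq ι] {j : ι → ℕ} {i : ι} (hi : j i ≠ 0) :
    j - Pi.single i 1 + Pi.single i 1 = j :=
  tsub_add_cancel_of_le (single_one_le_iff.2 hi)

section MultiIndex

variable {n : ℕ}

theorem add_single_mem_antidiagonalTuple {N : ℕ} {k : Fin n → ℕ} {i : Fin n} :
    k + Pi.single i 1 ∈ Finset.Nat.antidiagonalTuple n (N + 1) ↔
      k ∈ Finset.Nat.antidiagonalTuple n N := by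
  simp [Finset.Nat.mem_antidiagonalTuple, sum_add_distrib]

theorem sum_antidiagonalTuple_succ_filter_ne_zero {M : Type*} [AddCommMonoid M] (N : ℕ)
    (i : Fin n) (f : (Fin n → ℕ) → M) :
    ∑ j ∈ Finset.Nat.antidiagonalTuple n (N + 1) with j i ≠ 0, f j =
      ∑ k ∈ Finset.Nat.antidiagonalTuple n N, f (k + Pi.single i 1) := by
  refine (sum_nbij' (· + Pi.single i 1) (· - Pi.single i 1) ?_ ?_ ?_ ?_ fun _ _ => rfl).symm
  · intro k hk
    exact mem_filter.2 ⟨add_single_mem_antidiagonalTuple.2 hk, by simp⟩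
  · intro j hj
    obtain ⟨hj, hji⟩ := mem_filter.1 hj
    rwa [← add_single_mem_antidiagonalTuple (i := i), tsub_single_add_single hji]
  · intro k _
    exact add_tsub_cancel_right k _
  · intro j hj
    exact tsub_single_add_single (mem_filter.1 hj).2

theorem sum_antidiagonalTuple_succ_sum_ne_zero {M : Type*} [AddCommMonoid M] (N : ℕ)
    (f : Fin n → (Fin n → ℕ) → M) :
    ∑ j ∈ Finset.Nat.antidiagonalTuple n (N + 1), ∑ i with j i ≠ 0, f i j =
      ∑ k ∈ Finset.Nat.antidiagonalTuple n N, ∑ i, f i (k + Pi.single i 1) := by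
  calc
    _ = ∑ i, ∑ j ∈ Finset.Nat.antidiagonalTuple n (N + 1) with j i ≠ 0, f i j :=
      sum_comm' (by simp)
    _ = ∑ i, ∑ k ∈ Finset.Nat.antidiagonalTuple n N, f i (k + Pi.single i 1) := by
      simp only [sum_antidiagonalTuple_succ_filter_ne_zero]
    _ = _ := sum_comm

end MultiIndex

theorem star_mul_self_eq_sum_smul_of_sum_eq_one {ι R A : Type*} [Fintype ι]
    [CommSemiring R] [Semiring A] [StarRing A] [Algebra R A] {x : ι → A} {w : ι → R}
    (hx : ∑ i, w i • (star (x i) * x i) = 1) (a : A) :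
    star a * a = ∑ i, w i • (star (x i * a) * (x i * a)) := by
  calc
    star a * a = star a * (∑ i, w i • (star (x i) * x i)) * a := by rw [hx, mul_one]
    _ = _ := by
      simp only [mul_sum, sum_mul, mul_smul_comm, smul_mul_assoc, star_mul, mul_assoc]

section StarAlgebra

variable {R A : Type*} [CommSemiring R] [StarRing R] [Semiring A] [StarRing A] [Algebra R A]
  [StarModule R A]

theorem star_smul_mul_smul_self (s : R) (a : A) :
    star (s • a) * (s • a) = (star s * s) • (star a * a) := by
  rw [star_smul, smul_mul_smul_comm]

theorem sum_smul_star_mul_self_eq_one {n : ℕ} {x : Fin n → A} {w : Fin n → R}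
    {X : (Fin n → ℕ) → A} {s : Fin n → (Fin n → ℕ) → R} {c : ℕ → (Fin n → ℕ) → R}
    (hx : ∑ i, w i • (star (x i) * x i) = 1)
    (hX_zero : X 0 = 1) (hX : ∀ i k, x i * X k = s i k • X (k + Pi.single i 1))
    (hc_zero : c 0 0 = 1)
    (hc : ∀ N j, c (N + 1) j = ∑ i with j i ≠ 0, c N (j - Pi.single i 1) *
      (w i * (star (s i (j - Pi.single i 1)) * s i (j - Pi.single i 1))))
    (N : ℕ) :
    ∑ j ∈ Finset.Nat.antidiagonalTuple n N, c N j • (star (X j) * X j) = 1 := by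
  induction N with
  | zero => simp [Finset.Nat.antidiagonalTuple_zero_right, hX_zero, hc_zero]
  | succ N ih =>
    simp only [hc, sum_smul]
    rw [sum_antidiagonalTuple_succ_sum_ne_zero, ← ih]
    refine sum_congr rfl fun k _ => ?_
    simp only [star_mul_self_eq_sum_smul_of_sum_eq_one hx (X k), hX, star_smul_mul_smul_self,
      add_tsub_cancel_right, smul_sum, smul_smul]

end StarAlgebra

theorem prod_Ioi_castSucc {M : Type*} [CommMonoid M] {n : ℕ} (i : Fin n)
    (f : Fin (n + 1) → M) :
    ∏ l ∈ Ioi i.castSucc, f l = (∏ l ∈ Ioi i, f l.castSucc) * f (Fin.last n) := by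
  simp [← Finset.filter_lt_eq_Ioi, prod_filter, Fin.prod_univ_castSucc]

section DescMonomial

variable {A : Type*} [Semiring A]

/-- The ordered monomial `x_{n-1} ^ j_{n-1} * ⋯ * x₁ ^ j₁ * x₀ ^ j₀`, with the indices of the
noncommuting factors decreasing from left to right. -/
def descMonomial {n : ℕ} (x : Fin n → A) (j : Fin n → ℕ) : A :=
  (List.ofFn fun i : Fin n => x i.rev ^ j i.rev).prod

theorem descMonomial_zero {n : ℕ} (x : Fin n → A) : descMonomial x 0 = 1 := by
  simp [descMonomial]

theorem descMonomial_succ {n : ℕ} (x : Fin (n + 1) → A) (j : Fin (n + 1) → ℕ) :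
    descMonomial x j = x (Fin.last n) ^ j (Fin.last n) *
      descMonomial (fun i => x i.castSucc) fun i => j i.castSucc := by
  simp [descMonomial, Fin.rev_succ]

theorem mul_descMonomial {R : Type*} [CommSemiring R] [Algebra R A] {n : ℕ} {x : Fin n → A}
    {r : Fin n → Fin n → R} (hx : ∀ i l, i < l → SemiconjBy (x i) (x l) (r i l • x l))
    (i : Fin n) (k : Fin n → ℕ) :
    x i * descMonomial x k =
      (∏ l ∈ Ioi i, r i l ^ k l) • descMonomial x (k + Pi.single i 1) := by
  induction n with
  | zero => exact i.elim0
  | succ n ih =>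
    rw [descMonomial_succ, descMonomial_succ]
    cases i using Fin.lastCases with
    | last =>
      have hIoi : Ioi (Fin.last n) = ∅ := Ioi_top
      simp [hIoi, pow_succ', mul_assoc, (Fin.castSucc_lt_last _).ne]
    | cast i =>
      have hlast : x i.castSucc * x (Fin.last n) ^ k (Fin.last n) =
          (r i.castSucc (Fin.last n) • x (Fin.last n)) ^ k (Fin.last n) * x i.castSucc :=
        (hx _ _ (Fin.castSucc_lt_last i)).pow_right _
      have hinit := ih (x := fun i => x i.castSucc) (r := fun i l => r i.castSucc l.castSucc)
        (fun i l hil => hx _ _ (Fin.castSucc_lt_castSucc_iff.2 hil)) i fun l => k l.castSucc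
      have hsingle : (fun l : Fin n => (k + Pi.single i.castSucc 1 : Fin (n + 1) → ℕ) l.castSucc) =
          (fun l => k l.castSucc) + Pi.single i 1 := by
        ext l
        simp [Pi.single_apply]
      rw [prod_Ioi_castSucc, hsingle, ← mul_assoc, hlast, mul_assoc, hinit,
        smul_pow, smul_mul_smul_comm]
      simp [mul_comm]

end DescMonomial

theorem coef_nonneg (q : ℝ) (N : ℕ) (j₁ j₂ j₃ j₄ : ℤ) : 0 ≤ coef q N j₁ j₂ j₃ j₄ := by
  induction N generalizing j₁ j₂ j₃ j₄ with
  | zero =>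
    unfold coef
    split_ifs <;> norm_num
  | succ N ih =>
    have hpow (m : ℤ) : 0 ≤ q ^ (2 * m) := (even_two_mul m).zpow_nonneg q
    have hpow_neg : 0 ≤ q ^ (-2 * j₄) := by simpa using hpow (-j₄)
    exact add_nonneg (add_nonneg (add_nonneg
      (mul_nonneg (mul_nonneg (by positivity) (hpow _)) (ih _ _ _ _))
      (mul_nonneg (mul_nonneg (sq_nonneg q) (hpow _)) (ih _ _ _ _)))
      (mul_nonneg hpow_neg (ih _ _ _ _)))
      (ih _ _ _ _)

theorem coef_eq_zero_of_neg (q : ℝ) (N : ℕ) {j₁ j₂ j₃ j₄ : ℤ}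
    (hj : j₁ < 0 ∨ j₂ < 0 ∨ j₃ < 0 ∨ j₄ < 0) : coef q N j₁ j₂ j₃ j₄ = 0 := by
  induction N generalizing j₁ j₂ j₃ j₄ with
  | zero =>
    rw [coef, if_neg (by lia)]
  | succ N ih =>
    rw [coef, ih (by lia), ih (by lia), ih (by lia), ih (by lia)]
    simp

/-- The coefficient `c_j(N)` as a function of a multi-index `j`, whose entries are numbered from `0`
while those of `coef` are numbered from `1`. -/
noncomputable def coefMulti (q : ℝ) (N : ℕ) (j : Fin 4 → ℕ) : ℝ :=
  coef q N (j 0) (j 1) (j 2) (j 3)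

theorem coefMulti_nonneg (q : ℝ) (N : ℕ) (j : Fin 4 → ℕ) : 0 ≤ coefMulti q N j :=
  coef_nonneg ..

/-- The generators `(z₁*, z₂, z₃, z₄*)` out of which the vector `ψ` is built. -/
def halfStar {A : Type*} [Star A] (z : Fin 4 → A) : Fin 4 → A :=
  ![star (z 0), z 1, z 2, star (z 3)]

/-- The weights `w` with `∑ i, w i • (xᵢ* xᵢ) = 1` for the generators `x = halfStar z`. -/
def sphereWeight (q : ℝ) : Fin 4 → ℝ := ![q ^ 4, q ^ 2, 1, 1]

/-- The factor `r l` in `xᵢ * x_l = r l • (x_l * xᵢ)`, `i < l`, for the generators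
`x = halfStar z`; the entry at `0` is a placeholder. -/
noncomputable def exchangeFactor (q : ℝ) : Fin 4 → ℝ := ![q, q, q, q⁻¹]

theorem sq_prod_Ioi_zero_exchangeFactor {q : ℝ} (hq : q ≠ 0) (k : Fin 4 → ℕ) :
    (∏ l ∈ Ioi (0 : Fin 4), exchangeFactor q l ^ k l) ^ 2 = q ^ (2 * ((k 1 : ℤ) + k 2 - k 3)) := by
  have hIoi : Ioi (0 : Fin 4) = {1, 2, 3} := by decide
  simp [hIoi, exchangeFactor, zpow_mul', zpow_add₀ hq, zpow_sub₀ hq, zpow_ofNat, div_eq_mul_inv,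
    mul_assoc]

theorem sq_prod_Ioi_one_exchangeFactor {q : ℝ} (hq : q ≠ 0) (k : Fin 4 → ℕ) :
    (∏ l ∈ Ioi (1 : Fin 4), exchangeFactor q l ^ k l) ^ 2 = q ^ (2 * ((k 2 : ℤ) - k 3)) := by
  have hIoi : Ioi (1 : Fin 4) = {2, 3} := by decide
  simp [hIoi, exchangeFactor, zpow_mul', zpow_sub₀ hq, zpow_ofNat, div_eq_mul_inv]

theorem sq_prod_Ioi_two_exchangeFactor (q : ℝ) (k : Fin 4 → ℕ) :
    (∏ l ∈ Ioi (2 : Fin 4), exchangeFactor q l ^ k l) ^ 2 = q ^ (-2 * (k 3 : ℤ)) := by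
  have hIoi : Ioi (2 : Fin 4) = {3} := by decide
  simp [hIoi, exchangeFactor, zpow_mul']

theorem coefMulti_succ {q : ℝ} (hq : q ≠ 0) (N : ℕ) (j : Fin 4 → ℕ) :
    coefMulti q (N + 1) j = ∑ i with j i ≠ 0, coefMulti q N (j - Pi.single i 1) *
      (sphereWeight q i *
        (∏ l ∈ Ioi i, exchangeFactor q l ^ (j - Pi.single i 1 : Fin 4 → ℕ) l) ^ 2) := by
  have hIoi : Ioi (3 : Fin 4) = ∅ := Ioi_top
  simp only [sum_filter, Fin.sum_univ_four, sq_prod_Ioi_zero_exchangeFactor hq,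
    sq_prod_Ioi_one_exchangeFactor hq, sq_prod_Ioi_two_exchangeFactor, hIoi, prod_empty, coefMulti,
    coef]
  -- Where `j i = 0`, the term of the recursion with the negative index `j i - 1` vanishes.
  congr 3 <;> split_ifs with hi
  all_goals first
    | simp [sphereWeight, Nat.cast_sub (Nat.one_le_iff_ne_zero.2 hi), mul_comm]
    | simp [coef_eq_zero_of_neg, not_not.1 hi]

section SphereRelations

variable {A : Type*} [Ring A] [StarRing A] [Algebra ℂ A] {q : ℝ}

theorem VSRel.sum_sphereWeight_smul_eq_one {z : Fin 4 → A} (hz : VSRel q z) :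
    ∑ i, sphereWeight q i • (star (halfStar z i) * halfStar z i) = 1 := by
  obtain ⟨-, -, hstar, hsum⟩ := hz
  have hIio₁ : Iio (1 : Fin 4) = {0} := by decide
  have hIio₂ : Iio (2 : Fin 4) = {0, 1} := by decide
  have hz₂ : star (z 1) * z 1 = z 1 * star (z 1) + (1 - q ^ 2) • (z 0 * star (z 0)) := by
    simpa [hIio₁, ← Complex.coe_smul] using hstar 1
  have hz₃ : star (z 2) * z 2 =
      z 2 * star (z 2) + (1 - q ^ 2) • (z 0 * star (z 0) + z 1 * star (z 1)) := by
    simpa [hIio₂, ← Complex.coe_smul] using hstar 2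
  rw [Fin.sum_univ_four] at hsum ⊢
  simp only [sphereWeight, halfStar, Matrix.cons_val, star_star, hz₂, hz₃]
  rw [← hsum]
  module

theorem psiVec_eq_sqrt_smul_descMonomial (q : ℝ) (z₁ z₂ z₃ z₄ : A) (N : ℕ) (j : Fin 4 → ℕ) :
    psiVec q z₁ z₂ z₃ z₄ N j =
      √(coefMulti q N j) • descMonomial (halfStar ![z₁, z₂, z₃, z₄]) j := by
  rw [psiVec, Complex.coe_smul, coefMulti]
  simp [descMonomial, List.ofFn_succ, halfStar, mul_assoc]

variable [StarModule ℝ A]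

theorem VSRel.semiconjBy_halfStar {z : Fin 4 → A} (hz : VSRel q z) (hq : q ≠ 0) {i l : Fin 4}
    (hil : i < l) :
    SemiconjBy (halfStar z i) (halfStar z l) (exchangeFactor q l • halfStar z l) := by
  obtain ⟨hmul, hstar, -, -⟩ := hz
  simp only [Complex.coe_smul] at hmul hstar
  have hstar_inv (i : Fin 4) (hi : i ≠ 3) : z i * star (z 3) = q⁻¹ • (star (z 3) * z i) := by
    rw [hstar i 3 hi, inv_smul_smul₀ hq]
  have hmul_inv : star (z 0) * star (z 3) = q⁻¹ • (star (z 3) * star (z 0)) := by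
    rw [← star_mul, ← star_mul, hmul 0 3 (by decide), star_smul, star_trivial q, inv_smul_smul₀ hq]
  rw [SemiconjBy, smul_mul_assoc]
  match i, l, hil with
  | 0, 1, _ => exact hstar 1 0 (by decide)
  | 0, 2, _ => exact hstar 2 0 (by decide)
  | 1, 2, _ => exact hmul 1 2 (by decide)
  | 0, 3, _ => exact hmul_inv
  | 1, 3, _ => exact hstar_inv 1 (by decide)
  | 2, 3, _ => exact hstar_inv 2 (by decide)
  | 3, l, h => exact absurd h (Fin.le_last l).not_gt

theorem VSRel.sum_coefMulti_smul_eq_one {z : Fin 4 → A} (hz : VSRel q z) (hq : q ≠ 0) (N : ℕ) :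
    ∑ j ∈ Finset.Nat.antidiagonalTuple 4 N,
      coefMulti q N j • (star (descMonomial (halfStar z) j) * descMonomial (halfStar z) j) = 1 := by
  refine sum_smul_star_mul_self_eq_one hz.sum_sphereWeight_smul_eq_one (descMonomial_zero _)
    (mul_descMonomial fun i l => hz.semiconjBy_halfStar hq) ?_ (fun N j => ?_) N
  · simp [coefMulti, coef]
  · simpa only [star_trivial, ← sq] using coefMulti_succ hq N j

variable {z₁ z₂ z₃ z₄ : A}

theorem VSRel.sum_star_psiVec_mul_self (hz : VSRel q ![z₁, z₂, z₃, z₄]) (hq : q ≠ 0) (N : ℕ) :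
    ∑ j ∈ Finset.Nat.antidiagonalTuple 4 N,
      star (psiVec q z₁ z₂ z₃ z₄ N j) * psiVec q z₁ z₂ z₃ z₄ N j = 1 := by
  rw [← hz.sum_coefMulti_smul_eq_one hq N]
  refine sum_congr rfl fun j _ => ?_
  rw [psiVec_eq_sqrt_smul_descMonomial, star_smul_mul_smul_self, star_trivial (√_),
    Real.mul_self_sqrt (coefMulti_nonneg q N j)]

theorem VSRel.isStarProjection_projMat (hz : VSRel q ![z₁, z₂, z₃, z₄]) (hq : q ≠ 0) (N : ℕ) :
    IsStarProjection (projMat q z₁ z₂ z₃ z₄ N) := by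
  refine isStarProjection_vecMulVec_star
    (ψ := fun j : Finset.Nat.antidiagonalTuple 4 N => psiVec q z₁ z₂ z₃ z₄ N j) ?_
  rw [← hz.sum_star_psiVec_mul_self hq N]
  exact sum_coe_sort (Finset.Nat.antidiagonalTuple 4 N)
    fun j => star (psiVec q z₁ z₂ z₃ z₄ N j) * psiVec q z₁ z₂ z₃ z₄ N j

end SphereRelations

theorem projMat_isProjection_general {A : Type*} [Ring A] [StarRing A] [Algebra ℂ A]
    [StarModule ℝ A] (q : ℝ) (hq : q ≠ 0) (z₁ z₂ z₃ z₄ : A)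
    (hVS : VSRel q ![z₁, z₂, z₃, z₄]) :
    (∀ (N : ℕ) (j₁ j₂ j₃ j₄ : ℤ), 0 ≤ coef q N j₁ j₂ j₃ j₄) ∧
    ∀ N : ℕ,
      projMat q z₁ z₂ z₃ z₄ N * projMat q z₁ z₂ z₃ z₄ N = projMat q z₁ z₂ z₃ z₄ N ∧
      Matrix.conjTranspose (projMat q z₁ z₂ z₃ z₄ N) = projMat q z₁ z₂ z₃ z₄ N :=
  ⟨coef_nonneg q, fun N =>
    have hP := hVS.isStarProjection_projMat hq N
    ⟨hP.isIdempotentElem, hP.isSelfAdjoint⟩⟩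

/-- All coefficients `c_j(N)` are nonnegative, and for every `N` the matrix `P_N`
is a projection: `P_N² = P_N` and `P_N* = P_N`. -/
theorem projMat_isProjection {A : Type*} [NormedRing A] [StarRing A] [CStarRing A]
    [NormedAlgebra ℂ A] [CompleteSpace A]
    (q : ℝ) (hq : q ∈ Set.Ioo (0 : ℝ) 1) (z₁ z₂ z₃ z₄ : A)
    (hVS : VSRel q ![z₁, z₂, z₃, z₄]) :
    (∀ (N : ℕ) (j₁ j₂ j₃ j₄ : ℤ), 0 ≤ coef q N j₁ j₂ j₃ j₄) ∧
    ∀ N : ℕ,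
      projMat q z₁ z₂ z₃ z₄ N * projMat q z₁ z₂ z₃ z₄ N = projMat q z₁ z₂ z₃ z₄ N ∧
      Matrix.conjTranspose (projMat q z₁ z₂ z₃ z₄ N) = projMat q z₁ z₂ z₃ z₄ N := by
  -- A priori the involution is only additive; being isometric it is continuous,
  -- hence `ℝ`-linear.
  have : StarModule ℝ A := starModule_real_of_continuousStar
  exact projMat_isProjection_general q hq.1.ne' z₁ z₂ z₃ z₄ hVS
end
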